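/- If G is a finite bipartite graph with no isolated vertices in which every vertex has even degree and whose maximum degree is 4, then š(G) ≤ 3. -/

import Mathlib

open SimpleGraph Finset

/-- A proper edge coloring of `G` with colors in `ℕ`: distinct edges of `G`
sharing an endpoint receive distinct colors. -/
def IsProperEdgeColoring {V : Type*} (G : SimpleGraph V) (c : Sym2 V → ℕ) : Prop :=
  ∀ e₁ ∈ G.edgeSet, ∀ e₂ ∈ G.edgeSet, e₁ ≠ e₂ → (∃ v, v ∈ e₁ ∧ v ∈ e₂) → c e₁ ≠ c e₂

/-- The palette of a vertex `v`: the set of colors appearing on edges of `G` incident with `v`. -/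
def palette {V : Type*} (G : SimpleGraph V) (c : Sym2 V → ℕ) (v : V) : Set ℕ :=
  {n | ∃ e ∈ G.edgeSet, v ∈ e ∧ c e = n}

/-- The palette index of `G`: the minimum number of distinct palettes occurring in a
proper edge coloring of `G`. -/
noncomputable def paletteIndex {V : Type*} (G : SimpleGraph V) : ℕ :=
  sInf {k | ∃ c : Sym2 V → ℕ, IsProperEdgeColoring G c ∧ (Set.range (palette G c)).ncard = k}

/-!
In a bipartite graph, a grouping of the edges at each vertex into even groups can be halved
everywhere at once by a two-coloring `z` of the edges: pair up the edges inside each group. An edge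
then has one partner at its end in each side of the bipartition, so the pairs form two perfect
matchings on the set of edges, and the union of two perfect matchings is bipartite.

Halve first all the edges at each vertex, by `z`, and then, by `w`, the two `z`-classes at each
vertex of degree `4` and the whole pair of edges at each vertex of degree `2`. Under the coloring
`(z, w)` a vertex of degree `4` sees each of the four colors once, while at a vertex of degree `2`
both coordinates change, so its palette is the diagonal or its complement.
-/

section Involutions

variable {α : Type*}

theorem exists_bool_apply_eq_not_of_involutive {s : α → α} (hs : s.Involutive)
    (hs_ne : ∀ a, s a ≠ a) : ∃ c : α → Bool, ∀ a, c (s a) = !c a := by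
  classical
  let _ : LinearOrder α := linearOrderOfSTO WellOrderingRel
  refine ⟨fun a => decide (a < s a), fun a => ?_⟩
  rcases lt_or_gt_of_ne (hs_ne a) with h | h <;> simp [hs a, h, h.le]

variable {s t : Equiv.Perm α}

theorem apply_zpow_mul_apply_of_involutive (hs : Function.Involutive s)
    (ht : Function.Involutive t) (k : ℤ) (a : α) :
    t (((s * t) ^ k) a) = ((s * t) ^ (-k)) (t a) := by
  have hs_inv : s⁻¹ = s := Equiv.ext fun b => Equiv.Perm.inv_eq_iff_eq.2 (hs b).symm
  have ht_inv : t⁻¹ = t := Equiv.ext fun b => Equiv.Perm.inv_eq_iff_eq.2 (ht b).symm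
  have conj : t * (s * t) * t⁻¹ = (s * t)⁻¹ := by
    rw [mul_inv_rev, hs_inv, mul_assoc, mul_inv_cancel_right, ht_inv]
  have conj_pow : t * (s * t) ^ k * t⁻¹ = (s * t) ^ (-k) := by
    rw [← conj_zpow, conj, inv_zpow, zpow_neg]
  simp [← conj_pow]

theorem not_sameCycle_mul_apply_of_involutive (hs : Function.Involutive s)
    (ht : Function.Involutive t) (hs_ne : ∀ a, s a ≠ a) (ht_ne : ∀ a, t a ≠ a) (a : α) :
    ¬ (s * t).SameCycle a (t a) := by
  rintro ⟨k, hk⟩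
  have ht_pow (m : ℤ) : t (((s * t) ^ m) a) = ((s * t) ^ (k - m)) a := by
    rw [apply_zpow_mul_apply_of_involutive hs ht, ← hk, ← Equiv.Perm.mul_apply, ← zpow_add,
      neg_add_eq_sub]
  obtain ⟨m, rfl | rfl⟩ := Int.even_or_odd' k
  · refine ht_ne (((s * t) ^ m) a) ?_
    rw [ht_pow, two_mul, add_sub_cancel_right]
  · refine hs_ne (t (((s * t) ^ m) a)) ?_
    calc s (t (((s * t) ^ m) a)) = ((s * t) ^ (1 + m)) a := by rw [zpow_one_add]; rfl
      _ = t (((s * t) ^ m) a) := by rw [ht_pow]; congr 2; ring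

theorem exists_bool_apply_eq_not_of_involutive_pair (hs : Function.Involutive s)
    (ht : Function.Involutive t) (hs_ne : ∀ a, s a ≠ a) (ht_ne : ∀ a, t a ≠ a) :
    ∃ c : α → Bool, (∀ a, c (s a) = !c a) ∧ ∀ a, c (t a) = !c a := by
  -- `t` permutes the cycles of `s * t` without fixing any; color each cycle by a constant.
  let Cycles := Quotient (Equiv.Perm.SameCycle.setoid (s * t))
  let cycle : α → Cycles := Quotient.mk _
  let tCycle : Cycles → Cycles :=
    Quotient.map t fun a b ⟨k, hk⟩ =>
      ⟨-k, by rw [← apply_zpow_mul_apply_of_involutive hs ht, hk]⟩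
  have tCycle_invol : tCycle.Involutive :=
    Quotient.ind fun a => congrArg cycle (ht a)
  have tCycle_ne : ∀ q, tCycle q ≠ q :=
    Quotient.ind fun a h =>
      not_sameCycle_mul_apply_of_involutive hs ht hs_ne ht_ne a (Quotient.exact h).symm
  obtain ⟨c, hc⟩ := exists_bool_apply_eq_not_of_involutive tCycle_invol tCycle_ne
  have hct (a : α) : c (cycle (t a)) = !c (cycle a) := hc (cycle a)
  have cycle_s (a : α) : cycle (s a) = cycle (t a) :=
    Quotient.sound (Equiv.Perm.SameCycle.symm ⟨1, by simp [ht a]⟩)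
  exact ⟨c ∘ cycle, fun a => (congrArg c (cycle_s a)).trans (hct a), hct⟩

theorem exists_involutive_perm_of_even_fibers {β : Type*} (f : α → β)
    (hfin : ∀ b, (f ⁻¹' {b}).Finite) (heven : ∀ b, Even (f ⁻¹' {b}).ncard) :
    ∃ s : Equiv.Perm α, Function.Involutive s ∧ (∀ a, s a ≠ a) ∧ ∀ a, f (s a) = f a := by
  have nonempty_fiberEquiv (b : β) : ∃ n, Nonempty ({a // f a = b} ≃ Fin n × Bool) := by
    obtain ⟨n, hn⟩ := heven b
    have : Finite {a // f a = b} := hfin b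
    refine ⟨n, Finite.card_eq.1 ?_⟩
    calc Nat.card {a // f a = b} = n + n := hn
      _ = Nat.card (Fin n × Bool) := by simp [mul_two]
  choose n hn using nonempty_fiberEquiv
  let e : α ≃ Σ b, Fin (n b) × Bool :=
    (Equiv.sigmaFiberEquiv f).symm.trans (Equiv.sigmaCongrRight fun b => (hn b).some)
  let swap : Equiv.Perm (Σ b, Fin (n b) × Bool) :=
    Equiv.sigmaCongrRight fun _ => (Equiv.refl _).prodCongr Equiv.boolNot
  have swap_swap : Function.Involutive swap := fun ⟨b, i, ε⟩ => by simp [swap]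
  refine ⟨e.trans (swap.trans e.symm), fun a => ?_, fun a h => ?_, fun a => ?_⟩
  · simp [swap_swap (e a)]
  · have swap_fixed : swap (e a) = e a := e.symm_apply_eq.1 h
    simp [swap, Sigma.ext_iff, Prod.ext_iff] at swap_fixed
  · have fst_e (a : α) : (e a).1 = f a := rfl
    rw [← fst_e, ← fst_e]
    simp [swap]

end Involutions

/-- The two-coloring `c` bisects `S` if each of its two classes contains half of the elements of
`S`. Cardinalities are natural numbers, so this is only meaningful for finite `S`. -/
def Bisects {α : Type*} (c : α → Bool) (S : Set α) : Prop :=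
  ∀ b, 2 * {a ∈ S | c a = b}.ncard = S.ncard

section Bisections

variable {α β : Type*} {S : Set α}

theorem Bisects.of_involutive {c : α → Bool} {s : α → α} (hS : S.Finite) (hs : s.Involutive)
    (hsS : Set.MapsTo s S S) (hc : ∀ a ∈ S, c (s a) = !c a) : Bisects c S := by
  intro b
  have image_class : s '' {a ∈ S | c a = b} = S \ {a ∈ S | c a = b} := by
    rw [hs.image_eq_preimage_symm]
    ext a
    have hsS_iff : s a ∈ S ↔ a ∈ S := ⟨fun h => hs a ▸ hsS h, fun h => hsS h⟩
    simp only [Set.mem_preimage, Set.mem_ofPred_eq, Set.mem_sdiff, hsS_iff]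
    cases b <;> grind
  have card_class := Set.ncard_image_of_injective {a ∈ S | c a = b} hs.injective
  have card_add := Set.ncard_sdiff_add_ncard_of_subset (Set.sep_subset S (c · = b)) hS
  rw [image_class] at card_class
  lia

theorem Bisects.image {f : α → β} {c : β → Bool} (hf : f.Injective) (h : Bisects (c ∘ f) S) :
    Bisects c (f '' S) := by
  intro b
  have image_class : {y ∈ f '' S | c y = b} = f '' {a ∈ S | (c ∘ f) a = b} := by
    ext y
    simp only [Set.mem_image, Set.mem_ofPred_eq, Function.comp_apply]
    grind
  rw [image_class, Set.ncard_image_of_injective _ hf, Set.ncard_image_of_injective _ hf, h b]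

theorem Bisects.bijOn_univ {c : α → Bool} (h : Bisects c S) (hS : S.ncard = 2) :
    Set.BijOn c S Set.univ := by
  have class_singleton (b : Bool) : ∃ a, {a ∈ S | c a = b} = {a} := by
    have := h b
    exact Set.ncard_eq_one.1 (by lia)
  refine ⟨Set.mapsTo_univ _ _, fun a ha a' ha' haa' => ?_, fun b _ => ?_⟩
  · obtain ⟨x, hx⟩ := class_singleton (c a')
    have ha_eq : a = x := by simpa [hx] using (show a ∈ {a ∈ S | c a = c a'} from ⟨ha, haa'⟩)
    have ha'_eq : a' = x := by simpa [hx] using (show a' ∈ {a ∈ S | c a = c a'} from ⟨ha', rfl⟩)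
    exact ha_eq.trans ha'_eq.symm
  · obtain ⟨x, hx⟩ := class_singleton b
    exact ⟨x, hx.symm.subset rfl⟩

theorem exists_bisects_fibers_pair {γ : Type*} (f : α → β) (g : α → γ)
    (hf_fin : ∀ b, (f ⁻¹' {b}).Finite) (hf_even : ∀ b, Even (f ⁻¹' {b}).ncard)
    (hg_fin : ∀ b, (g ⁻¹' {b}).Finite) (hg_even : ∀ b, Even (g ⁻¹' {b}).ncard) :
    ∃ c : α → Bool, (∀ b, Bisects c (f ⁻¹' {b})) ∧ ∀ b, Bisects c (g ⁻¹' {b}) := by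
  obtain ⟨s, hs, hs_ne, hfs⟩ := exists_involutive_perm_of_even_fibers f hf_fin hf_even
  obtain ⟨t, ht, ht_ne, hgt⟩ := exists_involutive_perm_of_even_fibers g hg_fin hg_even
  obtain ⟨c, hcs, hct⟩ := exists_bool_apply_eq_not_of_involutive_pair hs ht hs_ne ht_ne
  exact ⟨c,
    fun b => .of_involutive (hf_fin b) hs (fun a ha => (hfs a).trans ha) fun a _ => hcs a,
    fun b => .of_involutive (hg_fin b) ht (fun a ha => (hgt a).trans ha) fun a _ => hct a⟩

end Bisections

section PairsOfTwoColorings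

variable {α : Type*} {S : Set α} {z w : α → Bool}

theorem bijOn_prodMk_univ_of_bijOn_classes
    (hw : ∀ b, Set.BijOn w {a ∈ S | z a = b} Set.univ) :
    Set.BijOn (fun a => (z a, w a)) S Set.univ := by
  refine ⟨Set.mapsTo_univ _ _, fun a ha a' ha' haa' => ?_, fun ⟨b, b'⟩ _ => ?_⟩
  · obtain ⟨hz, hw_eq⟩ := Prod.mk.inj haa'
    exact (hw (z a')).injOn ⟨ha, hz⟩ ⟨ha', rfl⟩ hw_eq
  · obtain ⟨a, ⟨ha, hza⟩, hwa⟩ := (hw b).surjOn (Set.mem_univ b')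
    exact ⟨a, ha, Prod.ext hza hwa⟩

theorem image_prodMk_eq_diagonal_or_compl (hz : Set.BijOn z S Set.univ)
    (hw : Set.BijOn w S Set.univ) :
    (fun a => (z a, w a)) '' S = Set.diagonal Bool ∨
      (fun a => (z a, w a)) '' S = (Set.diagonal Bool)ᶜ := by
  obtain ⟨a, ha, hza⟩ := hz.surjOn (Set.mem_univ false)
  obtain ⟨a', ha', hza'⟩ := hz.surjOn (Set.mem_univ true)
  have hS : S = {a, a'} := by
    refine Set.Subset.antisymm (fun x hx => ?_) (Set.pair_subset ha ha')
    rcases hzx : z x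
    · exact .inl (hz.injOn hx ha (hzx.trans hza.symm))
    · exact .inr (hz.injOn hx ha' (hzx.trans hza'.symm))
  have haa' : a ≠ a' := by rintro rfl; simp [hza] at hza'
  have hw_ne : w a ≠ w a' := hw.injOn.ne ha ha' haa'
  have himage : (fun a => (z a, w a)) '' S = {(false, w a), (true, w a')} := by
    rw [hS, Set.image_pair, hza, hza']
  rw [himage]
  generalize w a = b at hw_ne
  generalize w a' = b' at hw_ne
  cases b <;> cases b' <;> simp [Set.ext_iff] at hw_ne ⊢

end PairsOfTwoColorings

section EdgeColorings

variable {V : Type*} {G : SimpleGraph V}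

theorem isProperEdgeColoring_iff_forall_injOn_incidenceSet {c : Sym2 V → ℕ} :
    IsProperEdgeColoring G c ↔ ∀ v, Set.InjOn c (G.incidenceSet v) :=
  ⟨fun h v e₁ he₁ e₂ he₂ hc => by_contra fun hne =>
      h e₁ he₁.1 e₂ he₂.1 hne ⟨v, he₁.2, he₂.2⟩ hc,
    fun h _ he₁ _ he₂ hne ⟨v, hv₁, hv₂⟩ hc => hne (h v ⟨he₁, hv₁⟩ ⟨he₂, hv₂⟩ hc)⟩

theorem palette_eq_image_incidenceSet (c : Sym2 V → ℕ) (v : V) :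
    palette G c v = c '' G.incidenceSet v := by
  simp only [palette, incidenceSet, Set.image, Set.mem_ofPred_eq, and_assoc]

theorem paletteIndex_le_of_encard_le {c : Sym2 V → ℕ} {n : ℕ} (hc : IsProperEdgeColoring G c)
    (hn : (Set.range (palette G c)).encard ≤ n) : paletteIndex G ≤ n :=
  le_trans (Nat.sInf_le ⟨c, hc, rfl⟩) (ENat.toNat_le_of_le_natCast hn)

theorem exists_isProperEdgeColoring_encard_range_palette_le {κ : Type*} [Countable κ]
    (c : Sym2 V → κ) (hc : ∀ v, Set.InjOn c (G.incidenceSet v)) (P : Set (Set κ))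
    (hP : ∀ v, c '' G.incidenceSet v ∈ P) :
    ∃ c' : Sym2 V → ℕ, IsProperEdgeColoring G c' ∧
      (Set.range (palette G c')).encard ≤ P.encard := by
  obtain ⟨ι, hι⟩ := exists_injective_nat κ
  refine ⟨ι ∘ c, isProperEdgeColoring_iff_forall_injOn_incidenceSet.2 fun v =>
    hι.injOn.comp (hc v) (Set.mapsTo_univ _ _), ?_⟩
  have range_subset : Set.range (palette G (ι ∘ c)) ⊆ Set.image ι '' P := by
    rintro _ ⟨v, rfl⟩
    exact ⟨_, hP v, by rw [palette_eq_image_incidenceSet, Set.image_comp]⟩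
  exact (Set.encard_le_encard range_subset).trans (Set.encard_image_le _ _)

theorem exists_endpoint_of_color (C : G.Coloring (Fin 2)) :
    ∃ endpoint : Fin 2 → G.edgeSet → V,
      ∀ i (e : G.edgeSet) v, endpoint i e = v ↔ v ∈ e.1 ∧ C v = i := by
  have existsUnique_endpoint (i : Fin 2) (e : G.edgeSet) : ∃! v, v ∈ e.1 ∧ C v = i := by
    obtain ⟨⟨u, v⟩, huv⟩ := e
    have hne : C u ≠ C v := C.valid huv
    rcases (by lia : C u = i ∨ C v = i) with hu | hv
    · exact ⟨u, by simp [hu], by grind⟩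
    · exact ⟨v, by simp [hv], by grind⟩
  choose endpoint endpoint_spec endpoint_unique using existsUnique_endpoint
  exact ⟨endpoint, fun i e v =>
    ⟨fun h => h ▸ endpoint_spec i e, fun h => (endpoint_unique i e v h).symm⟩⟩

theorem exists_bisects_incidence_classes {X : Type*} (hG : G.Colorable 2)
    (k : V → Sym2 V → X) (hfin : ∀ v x, {e ∈ G.incidenceSet v | k v e = x}.Finite)
    (heven : ∀ v x, Even {e ∈ G.incidenceSet v | k v e = x}.ncard) :
    ∃ c : Sym2 V → Bool, ∀ v x, Bisects c {e ∈ G.incidenceSet v | k v e = x} := by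
  obtain ⟨C⟩ := hG
  obtain ⟨endpoint, endpoint_eq_iff⟩ := exists_endpoint_of_color C
  let f (i : Fin 2) (e : G.edgeSet) : V × X := (endpoint i e, k (endpoint i e) e)
  have image_fiber (i : Fin 2) (v : V) (x : X) :
      Subtype.val '' (f i ⁻¹' {(v, x)}) = {e ∈ G.incidenceSet v | k v e = x ∧ C v = i} := by
    ext e
    constructor
    · rintro ⟨e, he, rfl⟩
      obtain ⟨rfl, rfl⟩ := Prod.mk.inj he
      obtain ⟨hmem, hcolor⟩ := (endpoint_eq_iff i e _).1 rfl
      exact ⟨⟨e.2, hmem⟩, rfl, hcolor⟩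
    · rintro ⟨⟨he, hv⟩, rfl, hcolor⟩
      have hend : endpoint i ⟨e, he⟩ = v := (endpoint_eq_iff i _ v).2 ⟨hv, hcolor⟩
      exact ⟨⟨e, he⟩, by simp [f, hend], rfl⟩
  have fiber_fin (i : Fin 2) (p : V × X) : (f i ⁻¹' {p}).Finite := by
    refine .of_finite_image ?_ Subtype.val_injective.injOn
    rw [image_fiber]
    exact (hfin p.1 p.2).subset fun e he => ⟨he.1, he.2.1⟩
  have fiber_even (i : Fin 2) (p : V × X) : Even (f i ⁻¹' {p}).ncard := by
    rw [← Set.ncard_image_of_injective _ Subtype.val_injective, image_fiber]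
    by_cases hp : C p.1 = i
    · simpa [hp] using heven p.1 p.2
    · simp [hp]
  obtain ⟨c, hc₀, hc₁⟩ := exists_bisects_fibers_pair (f 0) (f 1) (fiber_fin 0) (fiber_even 0)
    (fiber_fin 1) (fiber_even 1)
  have hc : ∀ i p, Bisects c (f i ⁻¹' {p}) := Fin.forall_fin_two.2 ⟨hc₀, hc₁⟩
  refine ⟨Function.extend Subtype.val c fun _ => false, fun v x => ?_⟩
  have class_eq : {e ∈ G.incidenceSet v | k v e = x} =
      Subtype.val '' (f (C v) ⁻¹' {(v, x)}) := by simp [image_fiber]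
  rw [class_eq]
  exact .image Subtype.val_injective
    ((Function.extend_comp Subtype.val_injective c _).symm ▸ hc _ _)

theorem ncard_incidenceSet_eq_degree (v : V) [Fintype (G.neighborSet v)] :
    (G.incidenceSet v).ncard = G.degree v := by
  classical
  rw [← G.card_incidenceSet_eq_degree v, Set.ncard_eq_toFinset_card', Set.toFinset_card]

theorem exists_bisects_incidenceSet_and_classes [G.LocallyFinite] (hG : G.Colorable 2)
    (heven : ∀ v, Even (G.degree v)) :
    ∃ z w : Sym2 V → Bool, (∀ v, Bisects z (G.incidenceSet v)) ∧
      (∀ v, 4 ∣ G.degree v → ∀ b, Bisects w {e ∈ G.incidenceSet v | z e = b}) ∧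
      ∀ v, ¬ 4 ∣ G.degree v → Bisects w (G.incidenceSet v) := by
  classical
  have hfin (v : V) : (G.incidenceSet v).Finite := Set.toFinite _
  obtain ⟨z, hz⟩ : ∃ z : Sym2 V → Bool, ∀ v, Bisects z (G.incidenceSet v) := by
    simpa using exists_bisects_incidence_classes hG (fun _ _ => ())
      (by simpa using hfin) (by simpa [ncard_incidenceSet_eq_degree] using heven)
  let k (v : V) (e : Sym2 V) : Option Bool := if 4 ∣ G.degree v then some (z e) else none
  have class_some (v : V) (hv : 4 ∣ G.degree v) (b : Bool) :
      {e ∈ G.incidenceSet v | k v e = some b} = {e ∈ G.incidenceSet v | z e = b} := by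
    simp [k, hv]
  have class_none (v : V) (hv : ¬ 4 ∣ G.degree v) :
      {e ∈ G.incidenceSet v | k v e = none} = G.incidenceSet v := by
    simp [k, hv]
  have class_even (v : V) (x : Option Bool) :
      Even {e ∈ G.incidenceSet v | k v e = x}.ncard := by
    by_cases hv : 4 ∣ G.degree v <;> rcases x with _ | b
    · simp [k, hv]
    · have two_mul_card := hz v b
      rw [ncard_incidenceSet_eq_degree] at two_mul_card
      rw [class_some v hv, even_iff_two_dvd]
      lia
    · rw [class_none v hv, ncard_incidenceSet_eq_degree]
      exact heven v
    · simp [k, hv]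
  obtain ⟨w, hw⟩ := exists_bisects_incidence_classes hG k
    (fun v _ => (hfin v).subset (Set.sep_subset _ _)) class_even
  exact ⟨z, w, hz, fun v hv b => class_some v hv b ▸ hw v _, fun v hv => class_none v hv ▸ hw v _⟩

end EdgeColorings

/-- Stated with `encard` because `paletteIndex` is a junk value on infinite graphs: a coloring with
infinitely many palettes would count as having none. -/
theorem palette_index_even_bipartite_deg4_general {V : Type*} (G : SimpleGraph V)
    [G.LocallyFinite] (hbip : G.Colorable 2) (hiso : ∀ v, 0 < G.degree v)
    (heven : ∀ v, Even (G.degree v)) (hmax : ∀ v, G.degree v ≤ 4) :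
    ∃ c : Sym2 V → ℕ, IsProperEdgeColoring G c ∧ (Set.range (palette G c)).encard ≤ 3 := by
  obtain ⟨z, w, hz, hw_classes, hw⟩ := exists_bisects_incidenceSet_and_classes hbip heven
  let P : Set (Set (Bool × Bool)) := {Set.univ, Set.diagonal Bool, (Set.diagonal Bool)ᶜ}
  have hP : P.encard ≤ 3 := by
    grw [Set.encard_insert_le, Set.encard_insert_le, Set.encard_singleton]
    norm_num
  have palette_at (v : V) : Set.InjOn (fun e => (z e, w e)) (G.incidenceSet v) ∧
      (fun e => (z e, w e)) '' G.incidenceSet v ∈ P := by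
    have hcard := ncard_incidenceSet_eq_degree (G := G) v
    obtain h2 | h4 : G.degree v = 2 ∨ G.degree v = 4 := by grind
    · have hz_bij := (hz v).bijOn_univ (hcard.trans h2)
      have hw_bij := (hw v (by lia)).bijOn_univ (hcard.trans h2)
      exact ⟨fun e he e' he' h => hz_bij.injOn he he' (congrArg Prod.fst h),
        .inr (image_prodMk_eq_diagonal_or_compl hz_bij hw_bij)⟩
    · have hzw_bij : Set.BijOn (fun e => (z e, w e)) (G.incidenceSet v) Set.univ :=
        bijOn_prodMk_univ_of_bijOn_classes fun b =>
          (hw_classes v (by lia) b).bijOn_univ (by have := hz v b; lia)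
      exact ⟨hzw_bij.injOn, .inl hzw_bij.image_eq⟩
  obtain ⟨c, hc, hcP⟩ := exists_isProperEdgeColoring_encard_range_palette_le
    (fun e => (z e, w e)) (fun v => (palette_at v).1) P fun v => (palette_at v).2
  exact ⟨c, hc, hcP.trans hP⟩

/-- If `G` is an Eulerian (all degrees even) bipartite graph with `Δ(G) = 4`
and no isolated vertices, then `š(G) ≤ 3`. -/
theorem palette_index_even_bipartite_deg4 {V : Type*} [Fintype V]
    (G : SimpleGraph V) [DecidableRel G.Adj]
    (hbip : G.Colorable 2)
    (hiso : ∀ v : V, 0 < G.degree v)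
    (heven : ∀ v : V, Even (G.degree v))
    (hmax : G.maxDegree = 4) :
    paletteIndex G ≤ 3 := by
  obtain ⟨c, hc, hc3⟩ := palette_index_even_bipartite_deg4_general G hbip hiso heven
    fun v => (G.degree_le_maxDegree v).trans_eq hmax
  exact paletteIndex_le_of_encard_le hc hc3
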